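/- Let C₁, C₂, C₃ be three classes belonging to a complete set Σ of p²+1 pairwise disjoint maximal commuting classes in U^{(p²)}. Suppose U₁ ∈ C₁ and V₁ ∈ C₂ are commuting, independent operators with U₁∘V₁ ∈ C₃ (so that a new maximal commuting class ⟨U₁,V₁⟩ can be formed). Then there exist Ũ₂ ∈ C₁ independent of U₁ and Ṽ₂ ∈ C₂ independent of V₁ such that Ũ₂∘Ṽ₂ ∈ C₃. -/

import Mathlib

/-!
Label `U^{(p²)}` by the phase space `F_p^4 = F_p^2 × F_p^2`, the pair `(x, z)` standing for
`X^{x₁}Z^{z₁} ⊗ X^{x₂}Z^{z₂}` (`pauli`). Up to phases, products become sums (`pauli_mul`), distinct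
labels give non-proportional matrices (`pauli_eq_of_eq_smul`), and commuting operators have
orthogonal labels for the symplectic form `z · x' - z' · x` (`symp_eq_zero_of_commute`). A set of
`p²` pairwise orthogonal vectors spans an isotropic subspace, which has dimension at most `2` and
hence at most `p²` elements; so a maximal commuting class together with the identity is a
two-dimensional subspace (`MaxCommClass.exists_submodule`).

The three classes thus give pairwise complementary planes `W₁, W₂, W₃`. Pick `w₂ ∈ W₃` not
proportional to the label of `U₁ ∘ V₁`, and split it as `w₂ = u₂ + v₂` along `W₁ ⊕ W₂`. Since `W₃`
meets `W₁` and `W₂` trivially, it is the graph of an isomorphism between them, so `u₂` and `v₂` are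
not proportional to the labels of `U₁` and `V₁` (`linear_core`).
-/

open Matrix
open scoped Kronecker

noncomputable section

/-- ω = exp(2πi/p), a primitive p-th root of unity. -/
def omega_p (p : ℕ) : ℂ := Complex.exp (2 * Real.pi * Complex.I / p)

/-- Generalized Pauli X on ℂ^p : X e_j = e_{j+1}. -/
def genX (p : ℕ) : Matrix (ZMod p) (ZMod p) ℂ :=
  Matrix.of fun i j => if i = j + 1 then 1 else 0

/-- Generalized Pauli Z on ℂ^p : Z e_j = ω^j e_j. -/
def genZ (p : ℕ) : Matrix (ZMod p) (ZMod p) ℂ :=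
  Matrix.of fun i j => if i = j then omega_p p ^ j.val else 0

/-- The space of p² × p² complex matrices. -/
abbrev PauliMat (p : ℕ) := Matrix (ZMod p × ZMod p) (ZMod p × ZMod p) ℂ

/-- The set U^{(p²)} of p⁴ two-particle generalized Pauli operators
    (X^m Z^n) ⊗ (X^k Z^l), with m,n,k,l ∈ {0,…,p−1}. -/
def PauliSet (p : ℕ) [NeZero p] : Set (PauliMat p) :=
  { U | ∃ m n k l : ZMod p,
      U = (genX p ^ m.val * genZ p ^ n.val) ⊗ₖ (genX p ^ k.val * genZ p ^ l.val) }

/-- A maximal commuting class: a subset of U^{(p²)} \ {I} of cardinality p² − 1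
    whose elements pairwise commute. -/
def MaxCommClass (p : ℕ) [NeZero p] (C : Set (PauliMat p)) : Prop :=
  C ⊆ PauliSet p \ {1} ∧ C.ncard = p ^ 2 - 1 ∧ ∀ U ∈ C, ∀ V ∈ C, Commute U V

/-- U ∘ V: the unique element of U^{(p²)} such that U·V is a power of ω times it. -/
def circ (p : ℕ) [NeZero p] (U V : PauliMat p) : PauliMat p :=
  @Classical.epsilon _ ⟨(0 : PauliMat p)⟩
    fun W => W ∈ PauliSet p ∧ ∃ j : ℕ, U * V = omega_p p ^ j • W

/-- U^{∘k}: the unique element of U^{(p²)} such that the matrix power U^k is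
    a power of ω times it. -/
def cpow (p : ℕ) [NeZero p] (U : PauliMat p) (k : ZMod p) : PauliMat p :=
  @Classical.epsilon _ ⟨(0 : PauliMat p)⟩
    fun W => W ∈ PauliSet p ∧ ∃ j : ℕ, U ^ k.val = omega_p p ^ j • W

/-- Independence: U^k is not a scalar multiple of V^l for any (k,l) ≠ (0,0). -/
def Indep (p : ℕ) [NeZero p] (U V : PauliMat p) : Prop :=
  ∀ k l : ZMod p, (k, l) ≠ (0, 0) → ∀ c : ℂ, U ^ k.val ≠ c • V ^ l.val

/-- The class ⟨U,V⟩ generated by a pair of independent commuting operators: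
    {U^{∘k} ∘ V^{∘l} : (k,l) ≠ (0,0)}. -/
def genClass (p : ℕ) [NeZero p] (U V : PauliMat p) : Set (PauliMat p) :=
  { W | ∃ k l : ZMod p, (k, l) ≠ (0, 0) ∧ W = circ p (cpow p U k) (cpow p V l) }

/-- A complete set of p² + 1 pairwise disjoint maximal commuting classes. -/
def CompleteSet (p : ℕ) [NeZero p] (S : Set (Set (PauliMat p))) : Prop :=
  S.ncard = p ^ 2 + 1 ∧ (∀ C ∈ S, MaxCommClass p C) ∧ S.Pairwise Disjoint

/-- A family of classes is unextendible if no maximal commuting class is contained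
    in U^{(p²)} \ ({I} ∪ ⋃ F). -/
def Unextendible (p : ℕ) [NeZero p] (F : Set (Set (PauliMat p))) : Prop :=
  ¬ ∃ C : Set (PauliMat p), MaxCommClass p C ∧ C ⊆ PauliSet p \ ({1} ∪ ⋃₀ F)

/-! ### Labels and the symplectic form -/

/-- Labels `(x, z)` of the operators `X^{x₁}Z^{z₁} ⊗ X^{x₂}Z^{z₂}`. -/
abbrev Phase (p : ℕ) := (ZMod p × ZMod p) × (ZMod p × ZMod p)

/-- The standard (non-symplectic) dot product on `F_p^2`. -/
def dot {p : ℕ} (x y : ZMod p × ZMod p) : ZMod p := x.1 * y.1 + x.2 * y.2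

/-- The symplectic form `z · x' - z' · x` on the space of labels. -/
def symp (p : ℕ) : LinearMap.BilinForm (ZMod p) (Phase p) :=
  LinearMap.mk₂ (ZMod p) (fun a b => dot a.2 b.1 - dot b.2 a.1)
    (by intros; simp only [dot, Prod.fst_add, Prod.snd_add]; ring)
    (by intros; simp only [dot, Prod.smul_fst, Prod.smul_snd, smul_eq_mul]; ring)
    (by intros; simp only [dot, Prod.fst_add, Prod.snd_add]; ring)
    (by intros; simp only [dot, Prod.smul_fst, Prod.smul_snd, smul_eq_mul]; ring)

lemma symp_apply {p : ℕ} (a b : Phase p) : symp p a b = dot a.2 b.1 - dot b.2 a.1 := rfl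

lemma symp_nondegenerate {p : ℕ} : (symp p).Nondegenerate := by
  constructor
  · intro a h
    have h1 := h ((1, 0), 0)
    have h2 := h ((0, 1), 0)
    have h3 := h (0, (1, 0))
    have h4 := h (0, (0, 1))
    simp only [symp_apply, dot] at h1 h2 h3 h4
    ext <;> simp_all
  · intro a h
    have h1 := h ((1, 0), 0)
    have h2 := h ((0, 1), 0)
    have h3 := h (0, (1, 0))
    have h4 := h (0, (0, 1))
    simp only [symp_apply, dot] at h1 h2 h3 h4
    ext <;> simp_all

/-! ### Pauli operators up to phase -/

/-- The element of `U^{(p²)}` with label `a`. -/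
def pauli (p : ℕ) [NeZero p] (a : Phase p) : PauliMat p :=
  (genX p ^ a.1.1.val * genZ p ^ a.2.1.val) ⊗ₖ (genX p ^ a.1.2.val * genZ p ^ a.2.2.val)

section Pauli

variable {p : ℕ} [NeZero p]

lemma omega_pow_val (j : ZMod p) : omega_p p ^ j.val = ZMod.stdAddChar j := by
  rw [ZMod.stdAddChar_apply, ZMod.toCircle_apply, omega_p, ← Complex.exp_nat_mul]
  congr 1
  ring

lemma genX_pow_apply (n : ℕ) (i j : ZMod p) :
    (genX p ^ n) i j = if i = j + n then 1 else 0 := by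
  induction n generalizing i with
  | zero => simp [Matrix.one_apply]
  | succ n ih =>
    rw [pow_succ', Matrix.mul_apply, Finset.sum_eq_single (j + n)]
    · rw [ih]
      simp [genX, add_assoc]
    · intro b _ hb
      simp [ih, hb]
    · simp

lemma genX_mul_genZ_apply (x z i j : ZMod p) :
    (genX p ^ x.val * genZ p ^ z.val) i j = if i = j + x then ZMod.stdAddChar (z * j) else 0 := by
  have hZ : genZ p = Matrix.diagonal fun j => (ZMod.stdAddChar j : ℂ) := by
    ext i j
    by_cases h : i = j
    · subst h
      simp [genZ, omega_pow_val]
    · simp [genZ, h]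
  rw [hZ, Matrix.diagonal_pow, Matrix.mul_diagonal, genX_pow_apply, Pi.pow_apply,
    ← AddChar.map_nsmul_eq_pow]
  simp

lemma pauli_apply (a : Phase p) (i j : ZMod p × ZMod p) :
    pauli p a i j = if i = j + a.1 then ZMod.stdAddChar (dot a.2 j) else 0 := by
  simp only [pauli, Matrix.kroneckerMap_apply, genX_mul_genZ_apply, dot, AddChar.map_add_eq_mul,
    Prod.ext_iff, Prod.fst_add, Prod.snd_add]
  split_ifs <;> simp_all

lemma pauli_zero : pauli p 0 = 1 := by
  ext i j
  simp [pauli_apply, dot, Matrix.one_apply]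

lemma pauli_mul (a b : Phase p) :
    pauli p a * pauli p b = (ZMod.stdAddChar (dot a.2 b.1) : ℂ) • pauli p (a + b) := by
  ext i j
  rw [Matrix.mul_apply, Finset.sum_eq_single (j + b.1)]
  · have h : i = j + b.1 + a.1 ↔ i = j + (a + b).1 := by
      rw [Prod.fst_add, add_comm a.1, add_assoc]
    simp only [pauli_apply, Matrix.smul_apply, h, smul_eq_mul, if_true, ite_mul, mul_ite, zero_mul,
      mul_zero, ← AddChar.map_add_eq_mul]
    congr 2
    simp only [dot, Prod.fst_add, Prod.snd_add]
    ring
  · intro b _ hb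
    simp [pauli_apply, hb]
  · simp

/-- Distinct labels give non-proportional matrices. The scalar must be `1` because the first column
of each of these matrices is a standard basis vector. -/
lemma pauli_eq_of_eq_smul {a b : Phase p} {c : ℂ} (h : pauli p a = c • pauli p b) :
    a = b ∧ c = 1 := by
  have key (i j) := congrFun (congrFun h i) j
  simp only [pauli_apply, Matrix.smul_apply, smul_eq_mul] at key
  have h1 : a.1 = b.1 := by
    by_contra hne
    have := key a.1 0
    simp [dot, hne] at this
  have hc : c = 1 := by
    have := key a.1 0
    simpa [dot, h1, eq_comm] using this
  refine ⟨Prod.ext h1 ?_, hc⟩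
  have h2 (j) : dot a.2 j = dot b.2 j := by
    have := key (j + a.1) j
    simpa [h1, hc, ZMod.injective_stdAddChar.eq_iff] using this
  exact Prod.ext (by simpa [dot] using h2 (1, 0)) (by simpa [dot] using h2 (0, 1))

lemma pauli_injective : Function.Injective (pauli p) := fun a b h =>
  (pauli_eq_of_eq_smul (c := 1) (by simpa using h)).1

lemma pauliSet_eq_range : PauliSet p = Set.range (pauli p) := by
  ext U
  constructor
  · rintro ⟨m, n, k, l, rfl⟩
    exact ⟨((m, k), (n, l)), rfl⟩
  · rintro ⟨a, rfl⟩
    exact ⟨_, _, _, _, rfl⟩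

lemma circ_pauli (a b : Phase p) : circ p (pauli p a) (pauli p b) = pauli p (a + b) := by
  have hex : ∃ W, W ∈ PauliSet p ∧ ∃ j : ℕ, pauli p a * pauli p b = omega_p p ^ j • W :=
    ⟨pauli p (a + b), by rw [pauliSet_eq_range]; exact ⟨_, rfl⟩, (dot a.2 b.1).val, by
      rw [pauli_mul, omega_pow_val]⟩
  obtain ⟨hW, j, hj⟩ := Classical.epsilon_spec hex
  change circ p (pauli p a) (pauli p b) ∈ _ at hW
  change _ = omega_p p ^ j • circ p (pauli p a) (pauli p b) at hj
  rw [pauliSet_eq_range] at hW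
  obtain ⟨c, hc⟩ := hW
  rw [← hc, pauli_mul] at hj
  have h0 : (ZMod.stdAddChar (dot a.2 b.1) : ℂ) ≠ 0 := by simp [← omega_pow_val, omega_p]
  have := pauli_eq_of_eq_smul
    (((inv_smul_smul₀ h0 _).symm.trans (congrArg _ hj)).trans (smul_smul _ _ _))
  rw [← hc, this.1]

lemma pauli_pow (a : Phase p) (n : ℕ) :
    ∃ s : ℂ, s ≠ 0 ∧ pauli p a ^ n = s • pauli p (n • a) := by
  induction n with
  | zero => exact ⟨1, one_ne_zero, by simp [pauli_zero]⟩
  | succ n ih =>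
    obtain ⟨s, hs, h⟩ := ih
    have h0 : (ZMod.stdAddChar (dot (n • a).2 a.1) : ℂ) ≠ 0 := by simp [← omega_pow_val, omega_p]
    exact ⟨_, mul_ne_zero hs h0, by rw [pow_succ, h, Matrix.smul_mul, pauli_mul, smul_smul,
      succ_nsmul]⟩

/-- Linearly independent labels give independent operators. -/
lemma indep_pauli {a b : Phase p}
    (h : ∀ k l : ZMod p, k • a = l • b → k = 0 ∧ l = 0) : Indep p (pauli p a) (pauli p b) := by
  intro k l hkl c hc
  obtain ⟨s, hs, h1⟩ := pauli_pow a k.val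
  obtain ⟨t, -, h2⟩ := pauli_pow b l.val
  rw [h1, h2, smul_smul] at hc
  have := (pauli_eq_of_eq_smul
    (((inv_smul_smul₀ hs _).symm.trans (congrArg _ hc)).trans (smul_smul _ _ _))).1
  rw [← Nat.cast_smul_eq_nsmul (ZMod p), ← Nat.cast_smul_eq_nsmul (ZMod p),
    ZMod.natCast_zmod_val, ZMod.natCast_zmod_val] at this
  obtain ⟨rfl, rfl⟩ := h k l this
  exact hkl rfl

lemma symp_eq_zero_of_commute {a b : Phase p} (h : Commute (pauli p a) (pauli p b)) :
    symp p a b = 0 := by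
  have h' := h.eq
  rw [pauli_mul, pauli_mul, add_comm b a] at h'
  have h0 : (ZMod.stdAddChar (dot a.2 b.1) : ℂ) ≠ 0 := by simp [← omega_pow_val, omega_p]
  have := (pauli_eq_of_eq_smul
    (((inv_smul_smul₀ h0 _).symm.trans (congrArg _ h')).trans (smul_smul _ _ _))).2
  rw [inv_mul_eq_one₀ h0] at this
  rw [symp_apply, ZMod.injective_stdAddChar this, sub_self]

end Pauli

/-! ### Maximal commuting classes are planes -/

/-- The labels of a maximal commuting class are the nonzero vectors of a (Lagrangian) plane. -/
lemma MaxCommClass.exists_submodule {p : ℕ} [NeZero p] [Fact p.Prime] {C : Set (PauliMat p)}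
    (hC : MaxCommClass p C) : ∃ W : Submodule (ZMod p) (Phase p),
      Module.finrank (ZMod p) W = 2 ∧ ∀ a, pauli p a ∈ C ↔ a ∈ W ∧ a ≠ 0 := by
  obtain ⟨hsub, hcard, hcomm⟩ := hC
  set T : Set (Phase p) := pauli p ⁻¹' C with hT
  have h0 : (0 : Phase p) ∉ T := fun h => (hsub h).2 pauli_zero
  have hTcard : (insert 0 T).ncard = p ^ 2 := by
    rw [Set.ncard_insert_of_notMem h0, hT,
      Set.ncard_preimage_of_injective_subset_range pauli_injective, hcard]
    · have : 0 < p ^ 2 := pow_pos (Nat.pos_of_neZero p) 2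
      omega
    · rw [← pauliSet_eq_range]
      exact fun U hU => (hsub hU).1
  set W := Submodule.span (ZMod p) T with hW
  have hiso : W ≤ (symp p).orthogonal W := by
    refine Submodule.span_le.2 fun a ha b hb => ?_
    change symp p b a = 0
    induction hb using Submodule.span_induction with
    | mem b hb => exact symp_eq_zero_of_commute (hcomm _ hb _ ha)
    | zero => simp
    | add x y _ _ hx hy => simp [hx, hy]
    | smul c x _ hx => simp [hx]
  have hle : Module.finrank (ZMod p) W ≤ 2 := by
    have h1 := Submodule.finrank_mono hiso
    rw [LinearMap.BilinForm.finrank_orthogonal symp_nondegenerate] at h1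
    simp at h1
    omega
  have hWcard : (W : Set (Phase p)).ncard = p ^ Module.finrank (ZMod p) W := by
    rw [← Nat.card_coe_set_eq]
    change Nat.card W = _
    rw [Module.natCard_eq_pow_finrank (K := ZMod p), Nat.card_zmod]
  have hp := (Fact.out : p.Prime)
  have heq : insert 0 T = (W : Set (Phase p)) := by
    refine Set.eq_of_subset_of_ncard_le
      (Set.insert_subset W.zero_mem Submodule.subset_span) ?_
    rw [hWcard, hTcard]
    exact Nat.pow_le_pow_right hp.pos hle
  refine ⟨W, ?_, fun a => ?_⟩
  · rw [← heq, hTcard] at hWcard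
    exact (Nat.pow_right_injective hp.two_le hWcard).symm
  · change a ∈ T ↔ a ∈ (W : Set (Phase p)) ∧ a ≠ 0
    rw [← heq]
    constructor
    · exact fun h => ⟨Or.inr h, fun ha => h0 (ha ▸ h)⟩
    · rintro ⟨h | h, hne⟩
      exacts [absurd h hne, h]

/-! ### Three complementary planes -/

/-- If `W₃` meets `W₂` trivially and `w₁, w₂ ∈ W₃` are independent, then their components
`u₁, u₂` modulo `W₂` are independent. -/
lemma components_indep {K V : Type*} [Field K] [AddCommGroup V] [Module K V]
    {W₂ W₃ : Submodule K V} (h23 : Disjoint W₂ W₃) {u₁ u₂ v₁ v₂ : V}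
    (hv₁ : v₁ ∈ W₂) (hv₂ : v₂ ∈ W₂) (h₁ : u₁ + v₁ ∈ W₃) (h₂ : u₂ + v₂ ∈ W₃)
    (hne : u₁ + v₁ ≠ 0) (hspan : u₂ + v₂ ∉ Submodule.span K {u₁ + v₁})
    (k l : K) (h : k • u₁ = l • u₂) : k = 0 ∧ l = 0 := by
  have hmem : k • (u₁ + v₁) - l • (u₂ + v₂) = k • v₁ - l • v₂ := by
    rw [smul_add, smul_add, h]
    abel
  have hz : k • (u₁ + v₁) - l • (u₂ + v₂) = 0 := by
    refine Submodule.disjoint_def.1 h23 _ ?_ ?_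
    · rw [hmem]
      exact W₂.sub_mem (W₂.smul_mem _ hv₁) (W₂.smul_mem _ hv₂)
    · exact W₃.sub_mem (W₃.smul_mem _ h₁) (W₃.smul_mem _ h₂)
  rw [sub_eq_zero] at hz
  have hl : l = 0 := by
    by_contra hl
    refine hspan (Submodule.mem_span_singleton.2 ⟨l⁻¹ * k, ?_⟩)
    rw [mul_smul, hz, inv_smul_smul₀ hl]
  subst hl
  rw [zero_smul, smul_eq_zero] at hz
  exact ⟨hz.resolve_right hne, rfl⟩

/-- The linear-algebra form of the theorem, for three pairwise complementary planes. -/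
lemma linear_core {K V : Type*} [Field K] [AddCommGroup V] [Module K V] [FiniteDimensional K V]
    (hV : Module.finrank K V = 4) {W₁ W₂ W₃ : Submodule K V}
    (hd₁ : Module.finrank K W₁ = 2) (hd₂ : Module.finrank K W₂ = 2)
    (hd₃ : Module.finrank K W₃ = 2)
    (h12 : Disjoint W₁ W₂) (h13 : Disjoint W₁ W₃) (h23 : Disjoint W₂ W₃)
    {u₁ v₁ : V} (hu₁ : u₁ ∈ W₁) (hv₁ : v₁ ∈ W₂) (hw₁ : u₁ + v₁ ∈ W₃) (hne : u₁ + v₁ ≠ 0) :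
    ∃ u₂ ∈ W₁, ∃ v₂ ∈ W₂, u₂ + v₂ ∈ W₃ ∧
      (∀ k l : K, k • u₁ = l • u₂ → k = 0 ∧ l = 0) ∧
      (∀ k l : K, k • v₁ = l • v₂ → k = 0 ∧ l = 0) := by
  obtain ⟨w, hw, hwspan⟩ : ∃ w ∈ W₃, w ∉ Submodule.span K {u₁ + v₁} := by
    by_contra! hcon
    have := Submodule.finrank_mono (show W₃ ≤ Submodule.span K {u₁ + v₁} from hcon)
    rw [hd₃, finrank_span_singleton hne] at this
    omega
  have htop : W₁ ⊔ W₂ = ⊤ :=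
    Submodule.eq_top_of_disjoint _ _ (by rw [hV, hd₁, hd₂]) h12
  obtain ⟨u₂, hu₂, v₂, hv₂, rfl⟩ := Submodule.mem_sup.1 (htop ▸ Submodule.mem_top : w ∈ W₁ ⊔ W₂)
  refine ⟨u₂, hu₂, v₂, hv₂, hw, components_indep h23 hv₁ hv₂ hw₁ hw hne hwspan, ?_⟩
  rw [add_comm u₁] at hw₁ hne hwspan
  rw [add_comm u₂] at hw hwspan
  exact components_indep h13 hu₁ hu₂ hw₁ hw hne hwspan

/-- If C₁, C₂, C₃ belong to a complete set Σ and U₁ ∈ C₁, V₁ ∈ C₂ are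
commuting independent operators with U₁∘V₁ ∈ C₃, then there are Ũ₂ ∈ C₁ independent
of U₁ and Ṽ₂ ∈ C₂ independent of V₁ with Ũ₂∘Ṽ₂ ∈ C₃. -/
theorem stmt13 (p : ℕ) [NeZero p] (hp : p.Prime)
    (S : Set (Set (PauliMat p))) (hS : CompleteSet p S)
    (C₁ C₂ C₃ : Set (PauliMat p)) (h₁ : C₁ ∈ S) (h₂ : C₂ ∈ S) (h₃ : C₃ ∈ S)
    (h12 : C₁ ≠ C₂) (h13 : C₁ ≠ C₃) (h23 : C₂ ≠ C₃)
    (U₁ V₁ : PauliMat p) (hU₁ : U₁ ∈ C₁) (hV₁ : V₁ ∈ C₂)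
    (hcomm : Commute U₁ V₁) (hind : Indep p U₁ V₁)
    (hprod : circ p U₁ V₁ ∈ C₃) :
    ∃ U₂ ∈ C₁, ∃ V₂ ∈ C₂,
      Indep p U₁ U₂ ∧ Indep p V₁ V₂ ∧ circ p U₂ V₂ ∈ C₃ := by
  have : Fact p.Prime := ⟨hp⟩
  obtain ⟨-, hmax, hdisj⟩ := hS
  obtain ⟨W₁, hd₁, hW₁⟩ := (hmax _ h₁).exists_submodule
  obtain ⟨W₂, hd₂, hW₂⟩ := (hmax _ h₂).exists_submodule
  obtain ⟨W₃, hd₃, hW₃⟩ := (hmax _ h₃).exists_submodule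
  have disj {C D : Set (PauliMat p)} {W W' : Submodule (ZMod p) (Phase p)}
      (hCD : Disjoint C D) (hW : ∀ a, pauli p a ∈ C ↔ a ∈ W ∧ a ≠ 0)
      (hW' : ∀ a, pauli p a ∈ D ↔ a ∈ W' ∧ a ≠ 0) : Disjoint W W' := by
    rw [Submodule.disjoint_def]
    intro a ha ha'
    by_contra hne
    exact Set.disjoint_left.1 hCD ((hW a).2 ⟨ha, hne⟩) ((hW' a).2 ⟨ha', hne⟩)
  have d12 := disj (hdisj h₁ h₂ h12) hW₁ hW₂
  have d13 := disj (hdisj h₁ h₃ h13) hW₁ hW₃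
  have d23 := disj (hdisj h₂ h₃ h23) hW₂ hW₃
  obtain ⟨u₁, rfl⟩ := pauliSet_eq_range.subset ((hmax _ h₁).1 hU₁).1
  obtain ⟨v₁, rfl⟩ := pauliSet_eq_range.subset ((hmax _ h₂).1 hV₁).1
  rw [circ_pauli, hW₃] at hprod
  obtain ⟨u₂, hu₂, v₂, hv₂, hw, hiu, hiv⟩ := linear_core
    (show Module.finrank (ZMod p) (Phase p) = 4 by simp) hd₁ hd₂ hd₃ d12 d13 d23
    ((hW₁ _).1 hU₁).1 ((hW₂ _).1 hV₁).1 hprod.1 hprod.2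
  -- Independence of `a` from `b` forces `b ≠ 0`: otherwise `0 • a = 1 • b`.
  have hne {a b : Phase p} (h : ∀ k l : ZMod p, k • a = l • b → k = 0 ∧ l = 0) : b ≠ 0 := by
    rintro rfl
    exact one_ne_zero (h 0 1 (by simp)).2
  refine ⟨pauli p u₂, (hW₁ _).2 ⟨hu₂, hne hiu⟩, pauli p v₂, (hW₂ _).2 ⟨hv₂, hne hiv⟩,
    indep_pauli hiu, indep_pauli hiv, ?_⟩
  rw [circ_pauli, hW₃]
  refine ⟨hw, fun h0 => hne hiu (Submodule.disjoint_def.1 d12 _ hu₂ ?_)⟩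
  rw [eq_neg_of_add_eq_zero_left h0]
  exact W₂.neg_mem hv₂
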